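/- arXiv:2505.07733 — 5 statements merged into one kernel-verified Lean document; each statement's English description precedes it below -/
import Mathlib

section
/- Let A₁ ∈ ℝ^{n×n}, A₂ ∈ ℝ^{n×N}, A_s ∈ ℝ^{N×n}, B ∈ ℝ^{n×m}, and set Ā₁ = A₁ + A₂·A_s. Let U₀ ∈ ℝ^{m×T}, X₀, X₁, W₀ ∈ ℝ^{n×T}, Q₀ ∈ ℝ^{N×T} satisfy the data equation X₁ = Ā₁·X₀ + A₂·Q₀ + B·U₀ + W₀. Suppose G₁ ∈ ℝ^{T×n} and G₂ ∈ ℝ^{T×N} satisfy X₀·G₁ = I_n, Q₀·G₁ = 0, X₀·G₂ = 0, Q₀·G₂ = I_N, and define K₁ = U₀·G₁ and K₂ = U₀·G₂. Then (X₁ − W₀)·G₁ = Ā₁ + B·K₁ and (X₁ − W₀)·G₂ = A₂ + B·K₂; consequently, for every x ∈ ℝⁿ, q ∈ ℝᴺ and w ∈ ℝⁿ, the closed-loop update (Ā₁ + B·K₁)x + (A₂ + B·K₂)q + w equals (X₁ − W₀)·G₁·x + (X₁ − W₀)·G₂·q + w. -/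
open Matrix

/-
Stack the data as V₀ = [X₀; Q₀], so that the data equation reads X₁ - W₀ = [Abar A₂] V₀ + B U₀.
Right multiplication by a right inverse G_K = [G₁ G₂] of V₀ cancels the data and leaves
(X₁ - W₀) G_K = [Abar A₂] + B (U₀ G_K); comparing column blocks gives the two identities.
-/

section BlockMatrix

variable {R m n N T : Type*}

theorem fromCols_add_fromCols [Add R] (A₁ B₁ : Matrix m n R) (A₂ B₂ : Matrix m N R) :
    fromCols A₁ A₂ + fromCols B₁ B₂ = fromCols (A₁ + B₁) (A₂ + B₂) := by
  ext i (j | j) <;> rfl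

theorem fromRows_mul_fromCols_eq_one_iff [Semiring R] [Fintype T]
    [DecidableEq n] [DecidableEq N] {X : Matrix n T R} {Q : Matrix N T R}
    {G₁ : Matrix T n R} {G₂ : Matrix T N R} :
    fromRows X Q * fromCols G₁ G₂ = 1 ↔ X * G₁ = 1 ∧ X * G₂ = 0 ∧ Q * G₁ = 0 ∧ Q * G₂ = 1 := by
  rw [fromRows_mul_fromCols, ← fromBlocks_one, fromBlocks_inj]

end BlockMatrix

section DataBasedRepresentation

variable {R m n N T p : Type*} [Ring R] [Fintype m] [Fintype n] [Fintype T] [DecidableEq n]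

theorem sub_mul_eq_add_mul_of_mul_eq_one {A : Matrix p n R} {B : Matrix p m R}
    {V₀ : Matrix n T R} {U₀ : Matrix m T R} {X₁ W₀ : Matrix p T R} {G : Matrix T n R}
    (hdata : X₁ = A * V₀ + B * U₀ + W₀) (hVG : V₀ * G = 1) :
    (X₁ - W₀) * G = A + B * (U₀ * G) :=
  calc
    (X₁ - W₀) * G = (A * V₀ + B * U₀) * G := by rw [hdata, add_sub_cancel_right]
    _ = A * (V₀ * G) + B * (U₀ * G) := by
      rw [Matrix.add_mul, Matrix.mul_assoc, Matrix.mul_assoc]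
    _ = A + B * (U₀ * G) := by rw [hVG, Matrix.mul_one]

theorem data_based_closed_loop_representation_general [Fintype N] [DecidableEq N]
    {Abar : Matrix p n R} {A₂ : Matrix p N R} {B : Matrix p m R}
    {U₀ : Matrix m T R} {X₀ : Matrix n T R} {Q₀ : Matrix N T R} {X₁ W₀ : Matrix p T R}
    (hdata : X₁ = Abar * X₀ + A₂ * Q₀ + B * U₀ + W₀)
    {G₁ : Matrix T n R} {G₂ : Matrix T N R}
    (hXG₁ : X₀ * G₁ = 1) (hQG₁ : Q₀ * G₁ = 0) (hXG₂ : X₀ * G₂ = 0) (hQG₂ : Q₀ * G₂ = 1)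
    {K₁ : Matrix m n R} (hK₁ : K₁ = U₀ * G₁) {K₂ : Matrix m N R} (hK₂ : K₂ = U₀ * G₂) :
    (X₁ - W₀) * G₁ = Abar + B * K₁ ∧
    (X₁ - W₀) * G₂ = A₂ + B * K₂ ∧
    ∀ (x : n → R) (q : N → R) (w : p → R),
      (Abar + B * K₁) *ᵥ x + (A₂ + B * K₂) *ᵥ q + w
        = ((X₁ - W₀) * G₁) *ᵥ x + ((X₁ - W₀) * G₂) *ᵥ q + w := by
  have hstacked : X₁ = fromCols Abar A₂ * fromRows X₀ Q₀ + B * U₀ + W₀ := by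
    rw [fromCols_mul_fromRows, hdata]
  have hrightInverse : fromRows X₀ Q₀ * fromCols G₁ G₂ = 1 :=
    fromRows_mul_fromCols_eq_one_iff.mpr ⟨hXG₁, hXG₂, hQG₁, hQG₂⟩
  have hblocks : fromCols ((X₁ - W₀) * G₁) ((X₁ - W₀) * G₂) =
      fromCols (Abar + B * K₁) (A₂ + B * K₂) := by
    simpa only [mul_fromCols, fromCols_add_fromCols, ← hK₁, ← hK₂] using
      sub_mul_eq_add_mul_of_mul_eq_one hstacked hrightInverse
  obtain ⟨hG₁, hG₂⟩ := fromCols_inj hblocks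
  exact ⟨hG₁, hG₂, fun x q w => by rw [hG₁, hG₂]⟩

end DataBasedRepresentation

/-- Lemma 1: data-based representation of the closed-loop system. -/
theorem data_based_closed_loop_representation
    (n N m T : ℕ)
    (A₁ : Matrix (Fin n) (Fin n) ℝ) (A₂ : Matrix (Fin n) (Fin N) ℝ)
    (As : Matrix (Fin N) (Fin n) ℝ) (B : Matrix (Fin n) (Fin m) ℝ)
    (Abar : Matrix (Fin n) (Fin n) ℝ) (hAbar : Abar = A₁ + A₂ * As)
    (U₀ : Matrix (Fin m) (Fin T) ℝ)
    (X₀ X₁ W₀ : Matrix (Fin n) (Fin T) ℝ)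
    (Q₀ : Matrix (Fin N) (Fin T) ℝ)
    (hdata : X₁ = Abar * X₀ + A₂ * Q₀ + B * U₀ + W₀)
    (G₁ : Matrix (Fin T) (Fin n) ℝ) (G₂ : Matrix (Fin T) (Fin N) ℝ)
    (hG11 : X₀ * G₁ = 1) (hG21 : Q₀ * G₁ = 0)
    (hG12 : X₀ * G₂ = 0) (hG22 : Q₀ * G₂ = 1)
    (K₁ : Matrix (Fin m) (Fin n) ℝ) (hK₁ : K₁ = U₀ * G₁)
    (K₂ : Matrix (Fin m) (Fin N) ℝ) (hK₂ : K₂ = U₀ * G₂) :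
    (X₁ - W₀) * G₁ = Abar + B * K₁ ∧
    (X₁ - W₀) * G₂ = A₂ + B * K₂ ∧
    ∀ (x : Fin n → ℝ) (q : Fin N → ℝ) (w : Fin n → ℝ),
      (Abar + B * K₁) *ᵥ x + (A₂ + B * K₂) *ᵥ q + w
        = ((X₁ - W₀) * G₁) *ᵥ x + ((X₁ - W₀) * G₂) *ᵥ q + w :=
  data_based_closed_loop_representation_general hdata hG11 hG21 hG12 hG22 hK₁ hK₂
end

section
/- Let F ∈ ℝ^{s×n}, g ∈ ℝ^s, λ ∈ (0,1], Q : ℝⁿ → ℝᴺ, M₁ ∈ ℝ^{n×n}, M₂ ∈ ℝ^{n×N}. Suppose there exist a matrix P_s ∈ ℝ^{s×s} with all entries nonnegative and a vector l ∈ ℝ^s such that: (i) P_s·F = F·M₁; (ii) for every x with F·x ≤ g (componentwise) one has F·M₂·Q(x) ≤ l componentwise; and (iii) P_s·g ≤ λ·g − l componentwise. Then for every x with F·x ≤ g, F·(M₁·x + M₂·Q(x)) ≤ λ·g componentwise; i.e., the polyhedral set {x : F·x ≤ g} is λ-contractive for the closed-loop dynamics x⁺ = M₁·x + M₂·Q(x).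 -/
open Matrix

/-!
A nonnegative `P` with `P * F = F * M` transports the constraint values of `x` monotonically to
those of `M *ᵥ x`: `F *ᵥ x ≤ g` gives `F *ᵥ (M *ᵥ x) = P *ᵥ (F *ᵥ x) ≤ P *ᵥ g`. The remainder adds
at most `l` to this bound, and `P *ᵥ g + l ≤ lam • g` leaves exactly that margin.
-/

section SafeSet

variable {m n R : Type*} [Fintype n] [Semiring R] [PartialOrder R]

/-- The polyhedral safe set `S(F, g)`, described by the componentwise inequalities `F x ≤ g`. -/
def safeSet (F : Matrix m n R) (g : m → R) : Set (n → R) :=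
  {x | F *ᵥ x ≤ g}

/-- `lam`-contractivity of `S(F, g)` under the dynamics `x⁺ = f x`. The contracted target is
encoded by scaling the bounds, as `S(F, lam • g)`; over the reals
this is `lam • S(F, g)` if `lam > 0`. -/
def IsContractiveSafeSet (F : Matrix m n R) (g : m → R) (lam : R) (f : (n → R) → n → R) : Prop :=
  Set.MapsTo f (safeSet F g) (safeSet F (lam • g))

lemma safeSet_mono (F : Matrix m n R) : Monotone (safeSet F) :=
  fun _ _ hgh _ hx ↦ le_trans hx hgh

lemma add_mem_safeSet [IsOrderedAddMonoid R] {F : Matrix m n R} {g h : m → R}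
    {x y : n → R} (hx : x ∈ safeSet F g) (hy : y ∈ safeSet F h) :
    x + y ∈ safeSet F (g + h) := by
  change F *ᵥ (x + y) ≤ g + h
  rw [mulVec_add]
  exact add_le_add hx hy

variable [IsOrderedRing R]

lemma monotone_mulVec_of_nonneg {P : Matrix m n R} (hP : ∀ i j, 0 ≤ P i j) :
    Monotone (P *ᵥ ·) :=
  fun _ _ huv i ↦ dotProduct_le_dotProduct_of_nonneg_left huv (hP i)

lemma mapsTo_mulVec_safeSet {k p : Type*} [Fintype m] [Fintype p]
    {F : Matrix m n R} {G : Matrix k p R} {M : Matrix p n R} {P : Matrix k m R}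
    (hP : ∀ i j, 0 ≤ P i j) (hPF : P * F = G * M) (g : m → R) :
    Set.MapsTo (M *ᵥ ·) (safeSet F g) (safeSet G (P *ᵥ g)) := fun x hx ↦
  calc
    G *ᵥ (M *ᵥ x) = P *ᵥ (F *ᵥ x) := by rw [mulVec_mulVec, ← hPF, mulVec_mulVec]
    _ ≤ P *ᵥ g := monotone_mulVec_of_nonneg hP hx

theorem polyhedral_contractivity_sufficient_conditions_general [Fintype m]
    {F : Matrix m n R} {g l : m → R} {lam : R} {M : Matrix n n R} {w : (n → R) → n → R}
    {P : Matrix m m R} (hP : ∀ i j, 0 ≤ P i j) (hPF : P * F = F * M)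
    (hw : Set.MapsTo w (safeSet F g) (safeSet F l)) (hbound : P *ᵥ g + l ≤ lam • g) :
    IsContractiveSafeSet F g lam (fun x ↦ M *ᵥ x + w x) := fun x hx ↦
  have linear_mem : M *ᵥ x ∈ safeSet F (P *ᵥ g) := mapsTo_mulVec_safeSet hP hPF g hx
  have sum_mem : M *ᵥ x + w x ∈ safeSet F (P *ᵥ g + l) := add_mem_safeSet linear_mem (hw hx)
  safeSet_mono F hbound sum_mem

end SafeSet

/-- model-based core of Theorem 1: sufficient conditions for
`λ`-contractivity of the polyhedral set `{x : F·x ≤ g}` for the closed-loop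
dynamics `x⁺ = M₁·x + M₂·Q(x)`. -/
theorem polyhedral_contractivity_sufficient_conditions
    (s n N : ℕ)
    (F : Matrix (Fin s) (Fin n) ℝ) (g : Fin s → ℝ)
    (lam : ℝ) (hlam : 0 < lam ∧ lam ≤ 1)
    (Q : (Fin n → ℝ) → (Fin N → ℝ))
    (M₁ : Matrix (Fin n) (Fin n) ℝ) (M₂ : Matrix (Fin n) (Fin N) ℝ)
    (Ps : Matrix (Fin s) (Fin s) ℝ) (hPs : ∀ i j, 0 ≤ Ps i j)
    (l : Fin s → ℝ)
    (h1 : Ps * F = F * M₁)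
    (h2 : ∀ x : Fin n → ℝ, F *ᵥ x ≤ g → F *ᵥ (M₂ *ᵥ Q x) ≤ l)
    (h3 : Ps *ᵥ g ≤ lam • g - l) :
    ∀ x : Fin n → ℝ, F *ᵥ x ≤ g → F *ᵥ (M₁ *ᵥ x + M₂ *ᵥ Q x) ≤ lam • g :=
  polyhedral_contractivity_sufficient_conditions_general hPs h1 h2 (le_sub_iff_add_le.mp h3)
end

section
/- Let A₁ ∈ ℝ^{n×n}, A₂ ∈ ℝ^{n×N}, A_s ∈ ℝ^{N×n}, B ∈ ℝ^{n×m}, Ā₁ = A₁ + A₂·A_s, and Q : ℝⁿ → ℝᴺ. Let the data satisfy X₁ = Ā₁·X₀ + A₂·Q₀ + B·U₀ + W₀ where the disturbance data matrix W₀ ∈ ℝ^{n×T} satisfies ‖W₀‖ ≤ T·h_w, and let G₁ ∈ ℝ^{T×n}, G₂ ∈ ℝ^{T×N} satisfy X₀·G₁ = I_n, Q₀·G₁ = 0, X₀·G₂ = 0, Q₀·G₂ = I_N; set K₁ = U₀·G₁, K₂ = U₀·G₂. Let F ∈ ℝ^{s×n}, g ∈ ℝ^s, λ ∈ (0,1].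 Suppose there exist P_s ∈ ℝ^{s×s} with all entries nonnegative and l ∈ ℝ^s such that: (i) P_s·F = F·X₁·G₁; (ii) for each row index i, for all x with F·x ≤ g, all W ∈ ℝ^{n×T} with ‖W‖ ≤ T·h_w, and all w ∈ ℝⁿ with ‖w‖ ≤ h_w, the i-th component of F·(X₁·G₂·Q(x) − W·(G₁·x + G₂·Q(x)) + w) is at most l_i; and (iii) P_s·g ≤ λ·g − l componentwise. Then for every x with F·x ≤ g and every w with ‖w‖ ≤ h_w, F·((Ā₁ + B·K₁)·x + (A₂ + B·K₂)·Q(x) + w) ≤ λ·g componentwise. -/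
open Matrix

/-- The ∞-norm of a vector (maximum absolute entry). -/
noncomputable def vecNormInf {n : ℕ} (x : Fin n → ℝ) : ℝ := ⨆ i, |x i|

/-- The induced L∞ operator norm of a matrix (maximum absolute row sum). -/
noncomputable def matNormInf {n T : ℕ} (M : Matrix (Fin n) (Fin T) ℝ) : ℝ :=
  ⨆ i, ∑ j, |M i j|

/-! The vector `v = G₁ x + G₂ q` represents the pair `(x, q)` in terms of the experiments, since
`X₀ v = x` and `Q₀ v = q`. Applying the data equation to `v` therefore replaces the unknown matrices
of the closed loop by `X₁`, at the price of the term `W₀ v`: the successor of `x` is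
`X₁ G₁ x + δ`. Since `P F = F X₁ G₁` with `P` nonnegative, the easy half of Farkas' lemma gives
`F X₁ G₁ x ≤ P g` on `{x | F x ≤ g}`, and `F δ ≤ l` by assumption. -/

section OrderedSemiring

variable {m n s R : Type*} [Fintype n] [Fintype s] [Semiring R] [PartialOrder R] [IsOrderedRing R]

theorem mulVec_le_mulVec_of_nonneg {P : Matrix m s R} (hP : ∀ i j, 0 ≤ P i j) {u v : s → R}
    (huv : u ≤ v) : P *ᵥ u ≤ P *ᵥ v :=
  fun i => dotProduct_le_dotProduct_of_nonneg_left huv (hP i)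

theorem mulVec_le_of_mul_eq_of_nonneg {P : Matrix m s R} {F : Matrix s n R} {H : Matrix m n R}
    (hP : ∀ i j, 0 ≤ P i j) (hPF : P * F = H) {x : n → R} {g : s → R} (hx : F *ᵥ x ≤ g) :
    H *ᵥ x ≤ P *ᵥ g := by
  rw [← hPF, ← mulVec_mulVec]
  exact mulVec_le_mulVec_of_nonneg hP hx

end OrderedSemiring

section DataRepresentation

variable {n N m T s R : Type*} [Fintype n] [Fintype N] [Fintype m] [Fintype T] [Ring R]

/-- The lumped disturbance `δ` of the paper, for the state `x`, the nonlinearity remainder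
`q = Q x`, the data disturbance `W` and the current disturbance `w`. -/
def lumpedDisturbance (X₁ W : Matrix n T R) (G₁ : Matrix T n R) (G₂ : Matrix T N R)
    (x : n → R) (q : N → R) (w : n → R) : n → R :=
  (X₁ * G₂) *ᵥ q - W *ᵥ (G₁ *ᵥ x + G₂ *ᵥ q) + w

variable [DecidableEq n] [DecidableEq N]
  {A : Matrix n n R} {A₂ : Matrix n N R} {B : Matrix n m R} {U₀ : Matrix m T R}
  {X₀ X₁ W₀ : Matrix n T R} {Q₀ : Matrix N T R} {G₁ : Matrix T n R} {G₂ : Matrix T N R}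

theorem closedLoop_eq_add_lumpedDisturbance
    (hdata : X₁ = A * X₀ + A₂ * Q₀ + B * U₀ + W₀)
    (hX₀G₁ : X₀ * G₁ = 1) (hQ₀G₁ : Q₀ * G₁ = 0) (hX₀G₂ : X₀ * G₂ = 0) (hQ₀G₂ : Q₀ * G₂ = 1)
    (x : n → R) (q : N → R) (w : n → R) :
    (A + B * (U₀ * G₁)) *ᵥ x + (A₂ + B * (U₀ * G₂)) *ᵥ q + w =
      (X₁ * G₁) *ᵥ x + lumpedDisturbance X₁ W₀ G₁ G₂ x q w := by
  set v := G₁ *ᵥ x + G₂ *ᵥ q with hv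
  have hX₀v : X₀ *ᵥ v = x := by simp [hv, mulVec_add, hX₀G₁, hX₀G₂]
  have hQ₀v : Q₀ *ᵥ v = q := by simp [hv, mulVec_add, hQ₀G₁, hQ₀G₂]
  have hX₁v : X₁ *ᵥ v = A *ᵥ x + A₂ *ᵥ q + B *ᵥ (U₀ *ᵥ v) + W₀ *ᵥ v := by
    simp only [hdata, add_mulVec, ← mulVec_mulVec, hX₀v, hQ₀v]
  calc (A + B * (U₀ * G₁)) *ᵥ x + (A₂ + B * (U₀ * G₂)) *ᵥ q + w
      = A *ᵥ x + A₂ *ᵥ q + B *ᵥ (U₀ *ᵥ v) + w := by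
        simp only [hv, add_mulVec, mulVec_add, ← mulVec_mulVec]
        abel
    _ = X₁ *ᵥ v - W₀ *ᵥ v + w := by rw [hX₁v, add_sub_cancel_right]
    _ = (X₁ * G₁) *ᵥ x + lumpedDisturbance X₁ W₀ G₁ G₂ x q w := by
        simp only [lumpedDisturbance, hv, mulVec_add, ← mulVec_mulVec]
        abel

variable [Fintype s] [PartialOrder R] [IsOrderedRing R]

theorem data_based_safe_control_with_disturbance_general
    {Q : (n → R) → (N → R)} {𝒲 : Set (Matrix n T R)} {𝒟 : Set (n → R)}
    (hW₀ : W₀ ∈ 𝒲) (hdata : X₁ = A * X₀ + A₂ * Q₀ + B * U₀ + W₀)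
    (hX₀G₁ : X₀ * G₁ = 1) (hQ₀G₁ : Q₀ * G₁ = 0) (hX₀G₂ : X₀ * G₂ = 0) (hQ₀G₂ : Q₀ * G₂ = 1)
    {F : Matrix s n R} {g l : s → R} {c : R} {P : Matrix s s R} (hP : ∀ i j, 0 ≤ P i j)
    (hPF : P * F = F * (X₁ * G₁))
    (hl : ∀ x, F *ᵥ x ≤ g → ∀ W ∈ 𝒲, ∀ w ∈ 𝒟,
      F *ᵥ lumpedDisturbance X₁ W G₁ G₂ x (Q x) w ≤ l)
    (hPg : P *ᵥ g ≤ c • g - l) {x w : n → R} (hx : F *ᵥ x ≤ g) (hw : w ∈ 𝒟) :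
    F *ᵥ ((A + B * (U₀ * G₁)) *ᵥ x + (A₂ + B * (U₀ * G₂)) *ᵥ Q x + w) ≤ c • g :=
  calc F *ᵥ ((A + B * (U₀ * G₁)) *ᵥ x + (A₂ + B * (U₀ * G₂)) *ᵥ Q x + w)
      = (F * (X₁ * G₁)) *ᵥ x + F *ᵥ lumpedDisturbance X₁ W₀ G₁ G₂ x (Q x) w := by
        rw [closedLoop_eq_add_lumpedDisturbance hdata hX₀G₁ hQ₀G₁ hX₀G₂ hQ₀G₂, mulVec_add,
          mulVec_mulVec]
    _ ≤ P *ᵥ g + l :=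
        add_le_add (mulVec_le_of_mul_eq_of_nonneg hP hPF hx) (hl x hx W₀ hW₀ w hw)
    _ ≤ c • g := le_sub_iff_add_le.mp hPg

end DataRepresentation

/-- Corollary 1: data-based sufficient conditions for
`λ`-contractivity of the polyhedral safe set in the presence of additive
disturbances, with the nonlinear remainder lumped into the disturbance. -/
theorem data_based_safe_control_with_disturbance
    (n N m T s : ℕ)
    (A₁ : Matrix (Fin n) (Fin n) ℝ) (A₂ : Matrix (Fin n) (Fin N) ℝ)
    (As : Matrix (Fin N) (Fin n) ℝ) (B : Matrix (Fin n) (Fin m) ℝ)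
    (Abar : Matrix (Fin n) (Fin n) ℝ) (hAbar : Abar = A₁ + A₂ * As)
    (Q : (Fin n → ℝ) → (Fin N → ℝ))
    (U₀ : Matrix (Fin m) (Fin T) ℝ)
    (X₀ X₁ W₀ : Matrix (Fin n) (Fin T) ℝ)
    (Q₀ : Matrix (Fin N) (Fin T) ℝ)
    (h_w : ℝ)
    (hW₀ : matNormInf W₀ ≤ T * h_w)
    (hdata : X₁ = Abar * X₀ + A₂ * Q₀ + B * U₀ + W₀)
    (G₁ : Matrix (Fin T) (Fin n) ℝ) (G₂ : Matrix (Fin T) (Fin N) ℝ)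
    (hG11 : X₀ * G₁ = 1) (hG21 : Q₀ * G₁ = 0)
    (hG12 : X₀ * G₂ = 0) (hG22 : Q₀ * G₂ = 1)
    (K₁ : Matrix (Fin m) (Fin n) ℝ) (hK₁ : K₁ = U₀ * G₁)
    (K₂ : Matrix (Fin m) (Fin N) ℝ) (hK₂ : K₂ = U₀ * G₂)
    (F : Matrix (Fin s) (Fin n) ℝ) (g : Fin s → ℝ)
    (lam : ℝ) (hlam : 0 < lam ∧ lam ≤ 1)
    (Ps : Matrix (Fin s) (Fin s) ℝ) (hPs : ∀ i j, 0 ≤ Ps i j)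
    (l : Fin s → ℝ)
    (h1 : Ps * F = F * (X₁ * G₁))
    (h2 : ∀ (i : Fin s) (x : Fin n → ℝ) (W : Matrix (Fin n) (Fin T) ℝ)
        (w : Fin n → ℝ),
        F *ᵥ x ≤ g → matNormInf W ≤ T * h_w → vecNormInf w ≤ h_w →
        (F *ᵥ ((X₁ * G₂) *ᵥ Q x - W *ᵥ (G₁ *ᵥ x + G₂ *ᵥ Q x) + w)) i ≤ l i)
    (h3 : Ps *ᵥ g ≤ lam • g - l) :
    ∀ (x : Fin n → ℝ) (w : Fin n → ℝ), F *ᵥ x ≤ g → vecNormInf w ≤ h_w →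
      F *ᵥ ((Abar + B * K₁) *ᵥ x + (A₂ + B * K₂) *ᵥ Q x + w) ≤ lam • g := by
  subst hK₁ hK₂
  exact fun _ _ => data_based_safe_control_with_disturbance_general
    (𝒲 := {W | matNormInf W ≤ T * h_w}) (𝒟 := {w | vecNormInf w ≤ h_w})
    hW₀ hdata hG11 hG21 hG12 hG22 hPs h1 (fun x hx W hW w hw i => h2 i x W w hx hW hw) h3
end

section
/- Let F ∈ ℝ^{s×n}, g ∈ ℝ^s, λ > 0, Q : ℝⁿ → ℝᴺ, M₁ ∈ ℝ^{n×n}, M₂ ∈ ℝ^{n×N}, and fix a row index i. Suppose α ∈ ℝ^s has all entries nonnegative, β ∈ ℝⁿ satisfies βᵀ = αᵀ·F − Fᵢ·M₁ (where Fᵢ is the i-th row of F) and βᵀ = Fᵢ·M₂·L₁ for some matrix L₁ ∈ ℝ^{N×n}, and v ∈ ℝⁿ satisfies L₁·v = Q(x₁). Suppose further that x₁ ∈ ℝⁿ is a global minimizer over ℝⁿ of the Lagrangian φ(x) = αᵀ·(F·x − g) − Fᵢ·(M₁·x + M₂·Q(x)), and that αᵀ·g + βᵀ·(v − x₁) ≤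 λ·gᵢ. Then for every x with F·x ≤ g componentwise, Fᵢ·(M₁·x + M₂·Q(x)) ≤ λ·gᵢ. -/
open Matrix

/-!
For multipliers `α ≥ 0`, the Lagrangian of the problem of maximizing `f` subject to `G x ≤ g` is at
most `-f x` at every feasible `x`, so minus its minimum bounds `f` on the feasible set. The two
expressions for `β` turn minus this minimum into `α ⬝ᵥ g + β ⬝ᵥ (v - x₁)`: stationarity takes care
of the linear terms, and `L₁ *ᵥ v = Q x₁` of the nonlinear one.
-/

section Lagrangian

variable {X m R : Type*} [Fintype m] [Ring R]

/-- The Lagrangian of the problem of maximizing `f x` subject to `G x ≤ g`, with multipliers `α`.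
Its sign is that of the equivalent problem of minimizing `-f x`. -/
def lagrangian (f : X → R) (G : X → m → R) (g α : m → R) (x : X) : R :=
  α ⬝ᵥ (G x - g) - f x

variable [PartialOrder R] [IsOrderedRing R]
  {f : X → R} {G : X → m → R} {g α : m → R} {x x₁ : X}

theorem le_neg_lagrangian (hα : 0 ≤ α) (hx : G x ≤ g) : f x ≤ -lagrangian f G g α x := by
  have penalty_nonpos : α ⬝ᵥ (G x - g) ≤ 0 := by
    simpa using dotProduct_le_dotProduct_of_nonneg_left (sub_nonpos.mpr hx) hα
  simpa [lagrangian] using penalty_nonpos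

theorem le_neg_lagrangian_of_isMinOn (hα : 0 ≤ α)
    (hmin : IsMinOn (lagrangian f G g α) {x | G x ≤ g} x₁) (hx : G x ≤ g) :
    f x ≤ -lagrangian f G g α x₁ :=
  (le_neg_lagrangian hα hx).trans (neg_le_neg (isMinOn_iff.mp hmin x hx))

end Lagrangian

section Stationary

variable {m n p q R : Type*} [Fintype m] [Fintype n] [Fintype p] [Fintype q] [Ring R]
  {F : Matrix m n R} {g α : m → R} {Q : (n → R) → q → R}
  {M₁ : Matrix p n R} {M₂ : Matrix p q R} {c : p → R}
  {β : n → R} {L₁ : Matrix q n R} {x₁ v : n → R}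

theorem neg_lagrangian_eq_of_stationary
    (hβ1 : β = α ᵥ* F - c ᵥ* M₁) (hβ2 : β = (c ᵥ* M₂) ᵥ* L₁) (hv : L₁ *ᵥ v = Q x₁) :
    -lagrangian (fun x ↦ c ⬝ᵥ (M₁ *ᵥ x + M₂ *ᵥ Q x)) (F *ᵥ ·) g α x₁ =
      α ⬝ᵥ g + β ⬝ᵥ (v - x₁) := by
  have linear_part : β ⬝ᵥ x₁ = α ⬝ᵥ (F *ᵥ x₁) - c ⬝ᵥ (M₁ *ᵥ x₁) := by
    rw [hβ1, sub_dotProduct, ← dotProduct_mulVec, ← dotProduct_mulVec]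
  have nonlinear_part : β ⬝ᵥ v = c ⬝ᵥ (M₂ *ᵥ Q x₁) := by
    rw [hβ2, ← dotProduct_mulVec, ← dotProduct_mulVec, hv]
  rw [lagrangian, dotProduct_sub, dotProduct_add, dotProduct_sub, linear_part, nonlinear_part]
  abel

theorem primal_dual_rowwise_contractivity_general [PartialOrder R] [IsOrderedRing R] {γ : R}
    (hα : 0 ≤ α) (hβ1 : β = α ᵥ* F - c ᵥ* M₁) (hβ2 : β = (c ᵥ* M₂) ᵥ* L₁)
    (hv : L₁ *ᵥ v = Q x₁)
    (hmin : IsMinOn (lagrangian (fun x ↦ c ⬝ᵥ (M₁ *ᵥ x + M₂ *ᵥ Q x)) (F *ᵥ ·) g α)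
      {x | F *ᵥ x ≤ g} x₁)
    (hbound : α ⬝ᵥ g + β ⬝ᵥ (v - x₁) ≤ γ) {x : n → R} (hx : F *ᵥ x ≤ g) :
    c ⬝ᵥ (M₁ *ᵥ x + M₂ *ᵥ Q x) ≤ γ :=
  calc c ⬝ᵥ (M₁ *ᵥ x + M₂ *ᵥ Q x)
      ≤ -lagrangian (fun x ↦ c ⬝ᵥ (M₁ *ᵥ x + M₂ *ᵥ Q x)) (F *ᵥ ·) g α x₁ :=
        le_neg_lagrangian_of_isMinOn hα hmin hx
    _ = α ⬝ᵥ g + β ⬝ᵥ (v - x₁) := neg_lagrangian_eq_of_stationary hβ1 hβ2 hv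
    _ ≤ γ := hbound

end Stationary

/-- row-wise core of Theorem 2: primal-dual sufficient condition
for row `i` of the `λ`-contractivity constraint, where `x₁` globally minimizes
the Lagrangian. -/
theorem primal_dual_rowwise_contractivity
    (s n N : ℕ)
    (F : Matrix (Fin s) (Fin n) ℝ) (g : Fin s → ℝ)
    (lam : ℝ) (hlam : 0 < lam)
    (Q : (Fin n → ℝ) → (Fin N → ℝ))
    (M₁ : Matrix (Fin n) (Fin n) ℝ) (M₂ : Matrix (Fin n) (Fin N) ℝ)
    (i : Fin s)
    (α : Fin s → ℝ) (hα : ∀ j, 0 ≤ α j)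
    (β : Fin n → ℝ) (L₁ : Matrix (Fin N) (Fin n) ℝ)
    (hβ1 : β = α ᵥ* F - (F i) ᵥ* M₁)
    (hβ2 : β = ((F i) ᵥ* M₂) ᵥ* L₁)
    (x₁ : Fin n → ℝ) (v : Fin n → ℝ) (hv : L₁ *ᵥ v = Q x₁)
    (hmin : ∀ x : Fin n → ℝ,
        α ⬝ᵥ (F *ᵥ x₁ - g) - (F i) ⬝ᵥ (M₁ *ᵥ x₁ + M₂ *ᵥ Q x₁)
          ≤ α ⬝ᵥ (F *ᵥ x - g) - (F i) ⬝ᵥ (M₁ *ᵥ x + M₂ *ᵥ Q x))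
    (hbound : α ⬝ᵥ g + β ⬝ᵥ (v - x₁) ≤ lam * g i) :
    ∀ x : Fin n → ℝ, F *ᵥ x ≤ g →
      (F i) ⬝ᵥ (M₁ *ᵥ x + M₂ *ᵥ Q x) ≤ lam * g i :=
  fun _ hx ↦ primal_dual_rowwise_contractivity_general hα hβ1 hβ2 hv
    (isMinOn_iff.mpr fun y _ ↦ hmin y) hbound hx
end

section
/- Let F ∈ ℝ^{s×n}, g ∈ ℝ^s, λ > 0, M₁ ∈ ℝ^{n×n}, M₂ ∈ ℝ^{n×N}, and fix a row index i. Let Q : ℝⁿ → ℝᴺ be differentiable with Jacobian L₁ ∈ ℝ^{N×n} at a point x₁ ∈ ℝⁿ. Suppose α ∈ ℝ^s has all entries nonnegative, β ∈ ℝⁿ satisfies βᵀ = αᵀ·F − Fᵢ·M₁ and βᵀ = Fᵢ·M₂·L₁, and v ∈ ℝⁿ satisfies L₁·v = Q(x₁). Suppose the Lagrangian φ(x) = αᵀ·(F·x − g) − Fᵢ·(M₁·x + M₂·Q(x)) is convex on ℝⁿ, and that αᵀ·g + βᵀ·(v − x₁) ≤ λ·gᵢ. Then for every x with F·x ≤ g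 componentwise, Fᵢ·(M₁·x + M₂·Q(x)) ≤ λ·gᵢ. -/
open Matrix

/-!
The multiplier `α` turns the constraint `F *ᵥ x ≤ g` into a Lagrangian `φ`, and on feasible points
the objective is at most `-φ x`. Equality of the two expressions for `β` says exactly that `φ` has
zero derivative at `x₁`, so convexity makes `x₁` a minimizer of `φ` and the objective is at most
`-φ x₁`. Because `L₁ *ᵥ v = Q x₁`, this bound equals `α ⬝ᵥ g + β ⬝ᵥ (v - x₁)`.
-/

section ConvexOn

variable {E : Type*} [NormedAddCommGroup E] [NormedSpace ℝ E] {C : Set E} {f : E → ℝ}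
  {f' : E →L[ℝ] ℝ} {x y : E}

theorem add_fderivWithin_apply_sub_le_of_convexOn (hf : ConvexOn ℝ C f) (hx : x ∈ C) (hy : y ∈ C)
    (hf' : HasFDerivWithinAt f f' C x) : f x + f' (y - x) ≤ f y := by
  let l : ℝ →ᵃ[ℝ] E := AffineMap.lineMap x y
  have hl0 : l 0 = x := AffineMap.lineMap_apply_zero x y
  have hl1 : l 1 = y := AffineMap.lineMap_apply_one x y
  have hconv : ConvexOn ℝ (l ⁻¹' C) (f ∘ l) := hf.comp_affineMap l
  have hderiv : HasDerivWithinAt (f ∘ l) (f' (y - x)) (l ⁻¹' C) 0 :=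
    HasFDerivWithinAt.comp_hasDerivWithinAt 0 (hl0.symm ▸ hf')
      AffineMap.hasDerivWithinAt_lineMap (Set.mapsTo_preimage l C)
  have hslope : f' (y - x) ≤ slope (f ∘ l) 0 1 :=
    hconv.le_slope_of_hasDerivWithinAt (by rwa [Set.mem_preimage, hl0])
      (by rwa [Set.mem_preimage, hl1]) zero_lt_one hderiv
  rw [slope_def_field, Function.comp_apply, Function.comp_apply, hl0, hl1, sub_zero,
    div_one] at hslope
  linarith

theorem isMinOn_of_convexOn_of_hasFDerivWithinAt_zero (hf : ConvexOn ℝ C f) (hx : x ∈ C)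
    (hf' : HasFDerivWithinAt f (0 : E →L[ℝ] ℝ) C x) : IsMinOn f C x := fun y hy => by
  simpa using add_fderivWithin_apply_sub_le_of_convexOn hf hx hy hf'

end ConvexOn

theorem hasFDerivWithinAt_const_dotProduct {𝕜 E ι : Type*} [NontriviallyNormedField 𝕜]
    [CompleteSpace 𝕜] [NormedAddCommGroup E] [NormedSpace 𝕜 E] [Fintype ι] {f : E → ι → 𝕜}
    {f' : E →L[𝕜] ι → 𝕜} {C : Set E} {x : E} (u : ι → 𝕜) (hf : HasFDerivWithinAt f f' C x) :
    HasFDerivWithinAt (fun y => u ⬝ᵥ f y)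
      ((dotProductBilin 𝕜 𝕜 u).toContinuousLinearMap ∘L f') C x :=
  (dotProductBilin 𝕜 𝕜 u).toContinuousLinearMap.hasFDerivAt.comp_hasFDerivWithinAt x hf

theorem dotProduct_mulVec_sub_nonpos {R m n : Type*} [Ring R] [PartialOrder R] [IsOrderedRing R]
    [Fintype m] [Fintype n] {A : Matrix m n R} {b α : m → R} {x : n → R} (hα : 0 ≤ α)
    (hx : A *ᵥ x ≤ b) : α ⬝ᵥ (A *ᵥ x - b) ≤ 0 := by
  simpa only [dotProduct_zero] using
    dotProduct_le_dotProduct_of_nonneg_left (sub_nonpos.2 hx) hα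

section Lagrangian

variable {ι κ ν m : Type*} [Fintype ι] [Fintype κ] [Fintype ν] [Fintype m]
  {F : Matrix ι κ ℝ} {g : ι → ℝ} {r : m → ℝ} {M₁ : Matrix m κ ℝ} {M₂ : Matrix m ν ℝ}
  {Q : (κ → ℝ) → ν → ℝ} {α : ι → ℝ} {β x x₁ v : κ → ℝ} {L₁ : Matrix ν κ ℝ} {C : Set (κ → ℝ)}

/-- The Lagrangian of maximizing `r ⬝ᵥ (M₁ *ᵥ x + M₂ *ᵥ Q x)` subject to `F *ᵥ x ≤ g`, with
multiplier `α` and with the sign for which one minimizes over `x`. In the contractivity theorem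
`r` is a row of `F`. -/
def closedLoopLagrangian (F : Matrix ι κ ℝ) (g : ι → ℝ) (r : m → ℝ) (M₁ : Matrix m κ ℝ)
    (M₂ : Matrix m ν ℝ) (Q : (κ → ℝ) → ν → ℝ) (α : ι → ℝ) (x : κ → ℝ) : ℝ :=
  α ⬝ᵥ (F *ᵥ x - g) - r ⬝ᵥ (M₁ *ᵥ x + M₂ *ᵥ Q x)

theorem le_neg_closedLoopLagrangian (hα : 0 ≤ α) (hx : F *ᵥ x ≤ g) :
    r ⬝ᵥ (M₁ *ᵥ x + M₂ *ᵥ Q x) ≤ -closedLoopLagrangian F g r M₁ M₂ Q α x := by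
  rw [closedLoopLagrangian, neg_sub, le_sub_self_iff]
  exact dotProduct_mulVec_sub_nonpos hα hx

theorem closedLoopLagrangian_eq (hβ : β = α ᵥ* F - r ᵥ* M₁) (x : κ → ℝ) :
    closedLoopLagrangian F g r M₁ M₂ Q α x = β ⬝ᵥ x - (r ᵥ* M₂) ⬝ᵥ Q x - α ⬝ᵥ g := by
  rw [closedLoopLagrangian, hβ, dotProduct_sub, dotProduct_add, sub_dotProduct,
    dotProduct_mulVec, dotProduct_mulVec, dotProduct_mulVec]
  ring

theorem hasFDerivWithinAt_closedLoopLagrangian_zero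
    (hQ : HasFDerivWithinAt Q (LinearMap.toContinuousLinearMap L₁.mulVecLin) C x₁)
    (hβ : β = α ᵥ* F - r ᵥ* M₁) (hβL : β = (r ᵥ* M₂) ᵥ* L₁) :
    HasFDerivWithinAt (closedLoopLagrangian F g r M₁ M₂ Q α) (0 : (κ → ℝ) →L[ℝ] ℝ) C x₁ := by
  rw [funext (closedLoopLagrangian_eq hβ)]
  refine (((hasFDerivWithinAt_const_dotProduct β (hasFDerivWithinAt_id x₁ C)).sub
    (hasFDerivWithinAt_const_dotProduct (r ᵥ* M₂) hQ)).sub_const (α ⬝ᵥ g)).congr_fderiv ?_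
  ext1 y
  change β ⬝ᵥ y - (r ᵥ* M₂) ⬝ᵥ (L₁ *ᵥ y) = 0
  rw [dotProduct_mulVec, ← hβL, sub_self]

theorem neg_closedLoopLagrangian_eq (hβ : β = α ᵥ* F - r ᵥ* M₁) (hβL : β = (r ᵥ* M₂) ᵥ* L₁)
    (hv : L₁ *ᵥ v = Q x₁) :
    -closedLoopLagrangian F g r M₁ M₂ Q α x₁ = α ⬝ᵥ g + β ⬝ᵥ (v - x₁) := by
  rw [closedLoopLagrangian_eq hβ, ← hv, dotProduct_mulVec, ← hβL, dotProduct_sub]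
  ring

theorem primal_dual_rowwise_contractivity_convex_general
    (hQ : HasFDerivWithinAt Q (LinearMap.toContinuousLinearMap L₁.mulVecLin) C x₁) (hα : 0 ≤ α)
    (hβ : β = α ᵥ* F - r ᵥ* M₁) (hβL : β = (r ᵥ* M₂) ᵥ* L₁) (hv : L₁ *ᵥ v = Q x₁)
    (hconv : ConvexOn ℝ C (closedLoopLagrangian F g r M₁ M₂ Q α)) (hx₁ : x₁ ∈ C) (hx : x ∈ C)
    (hxg : F *ᵥ x ≤ g) :
    r ⬝ᵥ (M₁ *ᵥ x + M₂ *ᵥ Q x) ≤ α ⬝ᵥ g + β ⬝ᵥ (v - x₁) := by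
  have hmin : IsMinOn (closedLoopLagrangian F g r M₁ M₂ Q α) C x₁ :=
    isMinOn_of_convexOn_of_hasFDerivWithinAt_zero hconv hx₁
      (hasFDerivWithinAt_closedLoopLagrangian_zero hQ hβ hβL)
  calc r ⬝ᵥ (M₁ *ᵥ x + M₂ *ᵥ Q x)
      ≤ -closedLoopLagrangian F g r M₁ M₂ Q α x := le_neg_closedLoopLagrangian hα hxg
    _ ≤ -closedLoopLagrangian F g r M₁ M₂ Q α x₁ := neg_le_neg (hmin hx)
    _ = α ⬝ᵥ g + β ⬝ᵥ (v - x₁) := neg_closedLoopLagrangian_eq hβ hβL hv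

end Lagrangian

/-- row-wise Theorem 2 with the second-order condition made
precise as convexity of the Lagrangian. -/
theorem primal_dual_rowwise_contractivity_convex
    (s n N : ℕ)
    (F : Matrix (Fin s) (Fin n) ℝ) (g : Fin s → ℝ)
    (lam : ℝ) (hlam : 0 < lam)
    (M₁ : Matrix (Fin n) (Fin n) ℝ) (M₂ : Matrix (Fin n) (Fin N) ℝ)
    (i : Fin s)
    (Q : (Fin n → ℝ) → (Fin N → ℝ))
    (x₁ : Fin n → ℝ) (L₁ : Matrix (Fin N) (Fin n) ℝ)
    (hQ : HasFDerivAt Q (LinearMap.toContinuousLinearMap L₁.mulVecLin) x₁)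
    (α : Fin s → ℝ) (hα : ∀ j, 0 ≤ α j)
    (β : Fin n → ℝ)
    (hβ1 : β = α ᵥ* F - (F i) ᵥ* M₁)
    (hβ2 : β = ((F i) ᵥ* M₂) ᵥ* L₁)
    (v : Fin n → ℝ) (hv : L₁ *ᵥ v = Q x₁)
    (hconv : ConvexOn ℝ Set.univ
        (fun x : Fin n → ℝ =>
          α ⬝ᵥ (F *ᵥ x - g) - (F i) ⬝ᵥ (M₁ *ᵥ x + M₂ *ᵥ Q x)))
    (hbound : α ⬝ᵥ g + β ⬝ᵥ (v - x₁) ≤ lam * g i) :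
    ∀ x : Fin n → ℝ, F *ᵥ x ≤ g →
      (F i) ⬝ᵥ (M₁ *ᵥ x + M₂ *ᵥ Q x) ≤ lam * g i := by
  intro x hx
  exact (primal_dual_rowwise_contractivity_convex_general hQ.hasFDerivWithinAt hα hβ1 hβ2 hv hconv
    (Set.mem_univ x₁) (Set.mem_univ x) hx).trans hbound
end
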